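/- Let $V^{(N)}$ be a sequence of COE matrices and fix $i \ne j$. Then the random variables $\sqrt{N}\, v_{ij}^{(N)}$ converge weakly as $N \to \infty$ to a standard complex Gaussian random variable, i.e., for all nonnegative integers $n, m$, $\lim_{N\to\infty} \mathbb{E}[(\sqrt{N} v_{ij}^{(N)})^n \overline{(\sqrt{N} v_{ij}^{(N)})^m}] = \delta_{nm}\, n!$. -/

import Mathlib

open MeasureTheory Matrix

noncomputable section

/-- Borel measurable structure on the unitary group. -/
instance (N : ℕ) : MeasurableSpace (Matrix.unitaryGroup (Fin N) ℂ) := borel _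

instance (N : ℕ) : BorelSpace (Matrix.unitaryGroup (Fin N) ℂ) := ⟨rfl⟩

/-- The entry `v_{ij} = (Uᵀ U)_{ij}` of the COE matrix `V = Uᵀ U` built from a
unitary matrix `U`. -/
def coeEntry {N : ℕ} (U : Matrix.unitaryGroup (Fin N) ℂ) (i j : Fin N) : ℂ :=
  (((U : Matrix (Fin N) (Fin N) ℂ))ᵀ * (U : Matrix (Fin N) (Fin N) ℂ)) i j

open Filter

/-!
Right invariance of Haar measure gives `𝔼[D_X F] = 0` for every smooth `F` and every complex matrix
`X`, where `D_X` is the complexified derivative along `U ↦ U exp(tX)`. On `V = Uᵀ U` it acts by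
`D_X V = Xᵀ V + V X`. For `i ≠ j` write `q = v_ij`, `d = v_jj`, `e_n = 𝔼|q|²ⁿ` and
`r_n = 𝔼[|d|² |q|²ⁿ]`. Apply this to `v_kj d̄ qⁿ q̄ⁿ` with `X = E_jk`, summed over all `k`, and
to `v_kj qⁿ q̄ⁿ⁺¹` with `X = E_ik`, summed over `k ≠ j`. As the columns of `V` are orthonormal,
the sums collapse to
  `(N + 2n + 1) r_n = 2 e_n` and `(N - 1 + n) e_{n+1} = (n + 1) (e_n - r_n)`.
Eliminating `r_n` yields a recursion with an explicit solution, and `Nⁿ e_n → n!`. The moments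
`𝔼[qⁿ q̄ᵐ]` with `n ≠ m` vanish because `D_1` multiplies `qⁿ q̄ᵐ` by `2(n - m)`.
-/

theorem natCast_mul_pow_sub_one_mul {R : Type*} [Semiring R] (n : ℕ) (x : R) :
    n * x ^ (n - 1) * x = n * x ^ n := by
  rcases eq_or_ne n 0 with rfl | hn
  · simp only [Nat.cast_zero, zero_mul]
  · rw [mul_assoc, pow_sub_one_mul hn]

theorem natCast_sub_one_add_natCast_ne_zero {R : Type*} [Ring R] [CharZero R] {N : ℕ} (hN : 1 < N)
    (k : ℕ) : (N - 1 + k : R) ≠ 0 := by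
  rw [← Nat.cast_pred (by lia), ← Nat.cast_add, Nat.cast_ne_zero]
  lia

/-- The value of `𝔼|v_ij|²ⁿ`, `i ≠ j`, for the COE on `N × N` matrices. -/
def coeMoment (N n : ℕ) : ℂ :=
  n.factorial * ((N - 1) / (N - 1 + 2 * n)) * ∏ l ∈ Finset.range n, (N - 1 + l : ℂ)⁻¹

theorem coeMoment_zero {N : ℕ} (hN : 1 < N) : coeMoment N 0 = 1 := by
  have h : (N - 1 : ℂ) ≠ 0 := by simpa using natCast_sub_one_add_natCast_ne_zero (R := ℂ) hN 0
  simp [coeMoment, h]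

theorem coeMoment_succ {N : ℕ} (hN : 1 < N) (n : ℕ) :
    (N + 2 * n + 1) * (N - 1 + n) * coeMoment N (n + 1) =
      (n + 1) * (N - 1 + 2 * n) * coeMoment N n := by
  have h₁ : (N - 1 + n : ℂ) ≠ 0 := natCast_sub_one_add_natCast_ne_zero hN n
  have h₂ : (N - 1 + 2 * n : ℂ) ≠ 0 := mod_cast natCast_sub_one_add_natCast_ne_zero hN (2 * n)
  have h₃ : (N + 2 * n + 1 : ℂ) ≠ 0 := mod_cast (N + 2 * n).succ_ne_zero
  have h₄ : (N - 1 + 2 * (n + 1) : ℂ) = N + 2 * n + 1 := by ring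
  simp only [coeMoment, Finset.prod_range_succ, Nat.factorial_succ, Nat.cast_mul, Nat.cast_succ, h₄]
  field_simp

theorem tendsto_pow_mul_coeMoment (n : ℕ) :
    Tendsto (fun N : ℕ => (N : ℂ) ^ n * coeMoment N n) atTop (nhds n.factorial) := by
  have ratio (a b : ℂ) : Tendsto (fun N : ℕ => (N + a) / (N - 1 + b)) atTop (nhds 1) := by
    convert tendsto_add_mul_div_add_mul_atTop_nhds a (b - 1) 1 one_ne_zero using 2 <;> ring
  have lim := ((ratio (-1) (2 * n)).const_mul (n.factorial : ℂ)).mul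
    (tendsto_finsetProd (Finset.range n) fun l _ => ratio 0 l)
  simp only [Finset.prod_const_one, mul_one] at lim
  refine lim.congr fun N => ?_
  simp only [coeMoment, add_zero, div_eq_mul_inv, Finset.prod_mul_distrib, Finset.prod_const,
    Finset.card_range]
  ring

theorem isMulRightInvariant_of_isHaarMeasure {G : Type*} [Group G] [TopologicalSpace G]
    [IsTopologicalGroup G] [LocallyCompactSpace G] [MeasurableSpace G] [BorelSpace G]
    (μ : Measure G) [μ.IsHaarMeasure] [IsProbabilityMeasure μ] : μ.IsMulRightInvariant where
  map_mul_right_eq_self g := by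
    have : IsProbabilityMeasure (μ.map (· * g)) :=
      Measure.isProbabilityMeasure_map (measurable_mul_const g).aemeasurable
    exact Measure.isHaarMeasure_eq_of_isProbabilityMeasure _ μ

theorem integrable_of_continuous {X E : Type*} [TopologicalSpace X] [CompactSpace X]
    [MeasurableSpace X] [OpensMeasurableSpace X] [NormedAddCommGroup E] {μ : Measure X}
    [IsFiniteMeasureOnCompacts μ] {f : X → E} (hf : Continuous f) : Integrable f μ :=
  hf.integrable_of_hasCompactSupport (.of_compactSpace f)

section OneParameterSubgroup

variable {G E : Type*} [Group G] [NormedAddCommGroup E] [NormedSpace ℝ E]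
  {c : ℝ → G} {F F' : G → E}

theorem hasDerivAt_mul_oneParameter (hc : ∀ s t, c (s + t) = c s * c t)
    (hF' : ∀ g, HasDerivAt (fun t => F (g * c t)) (F' g) 0) (g : G) (t : ℝ) :
    HasDerivAt (fun s => F (g * c s)) (F' (g * c t)) t := by
  have shift : (fun s => F (g * c s)) = fun s => F (g * c t * c (s - t)) := by
    funext s
    rw [mul_assoc, ← hc, add_sub_cancel]
  rw [shift]
  exact HasDerivAt.comp_sub_const t t (by simpa using hF' (g * c t))

theorem integral_eq_zero_of_hasDerivAt_mul_oneParameter [TopologicalSpace G]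
    [ContinuousMul G] [CompactSpace G] [MeasurableSpace G] [BorelSpace G] {μ : Measure G}
    [μ.IsMulRightInvariant] [IsFiniteMeasure μ]
    (hc : ∀ s t, c (s + t) = c s * c t) (hF : Continuous F) (hF' : Continuous F')
    (hd : ∀ g, HasDerivAt (fun t => F (g * c t)) (F' g) 0) : ∫ g, F' g ∂μ = 0 := by
  have hc0 : c 0 = 1 := by simpa using hc 0 0
  obtain ⟨C, hC⟩ := isCompact_univ.exists_bound_of_continuousOn hF'.continuousOn
  have deriv_integral : HasDerivAt (fun t => ∫ g, F (g * c t) ∂μ) (∫ g, F' (g * c 0) ∂μ) 0 :=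
    (hasDerivAt_integral_of_dominated_loc_of_deriv_le (F' := fun t g => F' (g * c t))
      (bound := fun _ => C) univ_mem
      (.of_forall fun t => (integrable_of_continuous (by fun_prop)).aestronglyMeasurable)
      (integrable_of_continuous (by fun_prop))
      (integrable_of_continuous (by fun_prop)).aestronglyMeasurable
      (.of_forall fun g t _ => hC _ (Set.mem_univ _)) (integrable_const C)
      (.of_forall fun g t _ => hasDerivAt_mul_oneParameter hc hd g t)).2
  simp only [integral_mul_right_eq_self, hc0, mul_one] at deriv_integral
  exact deriv_integral.unique (hasDerivAt_const _ _)

end OneParameterSubgroup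

section UnitaryGroup

variable {ι : Type*} [Fintype ι] [DecidableEq ι]

variable (ι) in
theorem compactSpace_unitaryGroup (𝕜 : Type*) [RCLike 𝕜] : CompactSpace (unitaryGroup ι 𝕜) := by
  have compact_box : IsCompact (Set.univ.pi fun _ : ι => Set.univ.pi fun _ : ι =>
      Metric.closedBall (0 : 𝕜) 1) :=
    isCompact_univ_pi fun _ => isCompact_univ_pi fun _ => isCompact_closedBall _ _
  refine isCompact_iff_compactSpace.mp <| compact_box.of_isClosed_subset
    (isClosed_unitary (R := Matrix ι ι 𝕜)) fun A hA i _ j _ => ?_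
  exact mem_closedBall_zero_iff.mpr (entry_norm_bound_of_unitary hA i j)

section LieDerivative

open scoped Matrix.Norms.L2Operator
open Complex

/-- `D` is the complexified Lie derivative of `F`: for skew-Hermitian `X = iH`, the function `D X`
is the derivative of `F` along the left-invariant vector field generating `U ↦ U exp(tX)`.
As `D` is required to be `ℂ`-linear, these values determine `D X` for every complex matrix `X`;
this allows integration by parts along elementary matrices, which are not skew-Hermitian. -/
def HasLieDeriv (F : C(unitaryGroup ι ℂ, ℂ))
    (D : Matrix ι ι ℂ →ₗ[ℂ] C(unitaryGroup ι ℂ, ℂ)) : Prop :=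
  ∀ (H : selfAdjoint (Matrix ι ι ℂ)) (U : unitaryGroup ι ℂ),
    HasDerivAt (fun t : ℝ => F (U * selfAdjoint.expUnitary (t • H)))
      (D (I • (H : Matrix ι ι ℂ)) U) 0

/-- The Lie derivative of `star F` when `D` is that of `F`. The adjoint and the sign make it
`ℂ`-linear again; they cancel on skew-Hermitian matrices. -/
def starDeriv (D : Matrix ι ι ℂ →ₗ[ℂ] C(unitaryGroup ι ℂ, ℂ)) :
    Matrix ι ι ℂ →ₗ[ℂ] C(unitaryGroup ι ℂ, ℂ) :=
  -((starLinearEquiv ℂ).toLinearMap ∘ₛₗ D ∘ₛₗ (starLinearEquiv ℂ).toLinearMap)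

theorem starDeriv_apply (D : Matrix ι ι ℂ →ₗ[ℂ] C(unitaryGroup ι ℂ, ℂ)) (X : Matrix ι ι ℂ)
    (U : unitaryGroup ι ℂ) : starDeriv D X U = -star (D (star X) U) := rfl

theorem expUnitary_add_smul (H : selfAdjoint (Matrix ι ι ℂ)) (s t : ℝ) :
    selfAdjoint.expUnitary ((s + t) • H) =
      selfAdjoint.expUnitary (s • H) * selfAdjoint.expUnitary (t • H) := by
  rw [add_smul, Commute.expUnitary_add]
  exact ((Commute.refl (H : Matrix ι ι ℂ)).smul_left s).smul_right t

theorem hasDerivAt_expUnitary_apply (H : selfAdjoint (Matrix ι ι ℂ)) (k l : ι) :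
    HasDerivAt (fun t : ℝ => (selfAdjoint.expUnitary (t • H) : Matrix ι ι ℂ) k l)
      ((I • (H : Matrix ι ι ℂ)) k l) 0 := by
  have exp_deriv : HasDerivAt (fun t : ℝ => (selfAdjoint.expUnitary (t • H) : Matrix ι ι ℂ))
      (I • (H : Matrix ι ι ℂ)) 0 := by
    simpa [smul_comm I] using hasDerivAt_exp_smul_const (𝕂 := ℝ) (I • (H : Matrix ι ι ℂ)) 0
  exact (entryLinearMap ℝ ℂ k l).toContinuousLinearMap.hasFDerivAt.comp_hasDerivAt _ exp_deriv

namespace HasLieDeriv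

variable {F G : C(unitaryGroup ι ℂ, ℂ)} {D E : Matrix ι ι ℂ →ₗ[ℂ] C(unitaryGroup ι ℂ, ℂ)}

theorem mul (hF : HasLieDeriv F D) (hG : HasLieDeriv G E) :
    HasLieDeriv (F * G) (F • E + G • D) := fun H U => by
  refine ((hF H U).mul (hG H U)).congr_deriv ?_
  simp only [zero_smul, selfAdjoint.expUnitary_zero, mul_one, LinearMap.add_apply,
    LinearMap.smul_apply, ContinuousMap.add_apply, smul_eq_mul, ContinuousMap.mul_apply]
  ring

theorem pow (hF : HasLieDeriv F D) (n : ℕ) :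
    HasLieDeriv (F ^ n) (((n : C(unitaryGroup ι ℂ, ℂ)) * F ^ (n - 1)) • D) := fun H U => by
  refine ((hF H U).pow n).congr_deriv ?_
  simp only [zero_smul, selfAdjoint.expUnitary_zero, mul_one, LinearMap.smul_apply, smul_eq_mul,
    ContinuousMap.mul_apply, ContinuousMap.natCast_apply, ContinuousMap.pow_apply]

protected theorem star (hF : HasLieDeriv F D) :
    HasLieDeriv (star F) (starDeriv D) := fun H U => by
  refine (hF H U).star.congr_deriv ?_
  simp [starDeriv_apply]

protected theorem one : HasLieDeriv (1 : C(unitaryGroup ι ℂ, ℂ)) 0 := fun _ _ =>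
  hasDerivAt_const _ _

theorem integral_eq_zero [MeasurableSpace (unitaryGroup ι ℂ)] [BorelSpace (unitaryGroup ι ℂ)]
    {μ : Measure (unitaryGroup ι ℂ)} [μ.IsMulRightInvariant] [IsFiniteMeasure μ]
    (hF : HasLieDeriv F D) (X : Matrix ι ι ℂ) : ∫ U, D X U ∂μ = 0 := by
  have := compactSpace_unitaryGroup ι ℂ
  have skew (H : selfAdjoint (Matrix ι ι ℂ)) : ∫ U, D (I • (H : Matrix ι ι ℂ)) U ∂μ = 0 :=
    integral_eq_zero_of_hasDerivAt_mul_oneParameter (expUnitary_add_smul H) F.continuous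
      (ContinuousMap.continuous _) (hF H)
  have selfAdj (H : selfAdjoint (Matrix ι ι ℂ)) : ∫ U, D (H : Matrix ι ι ℂ) U ∂μ = 0 := by
    simpa [integral_const_mul] using skew H
  rw [← realPart_add_I_smul_imaginaryPart X]
  simp only [map_add, ContinuousMap.add_apply]
  rw [integral_add (integrable_of_continuous (map_continuous _))
    (integrable_of_continuous (map_continuous _)), selfAdj, skew, add_zero]

theorem integral_sum_eq_zero [MeasurableSpace (unitaryGroup ι ℂ)] [BorelSpace (unitaryGroup ι ℂ)]
    {μ : Measure (unitaryGroup ι ℂ)} [μ.IsMulRightInvariant] [IsFiniteMeasure μ]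
    {κ : Type*} {s : Finset κ} {F : κ → C(unitaryGroup ι ℂ, ℂ)}
    {D : κ → Matrix ι ι ℂ →ₗ[ℂ] C(unitaryGroup ι ℂ, ℂ)} (hF : ∀ k, HasLieDeriv (F k) (D k))
    (X : κ → Matrix ι ι ℂ) : ∫ U, ∑ k ∈ s, D k (X k) U ∂μ = 0 := by
  have := compactSpace_unitaryGroup ι ℂ
  rw [integral_finsetSum _ fun k _ => integrable_of_continuous (map_continuous _)]
  exact Finset.sum_eq_zero fun k _ => (hF k).integral_eq_zero (X k)

end HasLieDeriv

end LieDerivative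

/-- The entry `v_{kl}` of the COE matrix `Uᵀ U`, as a continuous function of `U`. -/
def coeCoeff (k l : ι) : C(unitaryGroup ι ℂ, ℂ) where
  toFun U := ((U : Matrix ι ι ℂ)ᵀ * (U : Matrix ι ι ℂ)) k l
  continuous_toFun := Continuous.matrix_elem (by fun_prop) k l

theorem coeCoeff_comm (k l : ι) : coeCoeff k l = coeCoeff l k := by
  ext U
  simp only [coeCoeff, ContinuousMap.coe_mk, mul_apply, transpose_apply, mul_comm]

theorem coeCoeff_mul_apply (U W : unitaryGroup ι ℂ) (k l : ι) :
    coeCoeff k l (U * W) = ∑ b, (∑ a, (W : Matrix ι ι ℂ) a k * coeCoeff a b U) * W b l := by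
  have conj : ((U * W : unitaryGroup ι ℂ) : Matrix ι ι ℂ)ᵀ * (U * W : unitaryGroup ι ℂ) =
      (W : Matrix ι ι ℂ)ᵀ * ((U : Matrix ι ι ℂ)ᵀ * U) * W := by
    simp only [UnitaryGroup.mul_val, transpose_mul, Matrix.mul_assoc]
  exact congr_fun₂ conj k l

theorem sum_coeCoeff_mul_star_coeCoeff (i j : ι) (U : unitaryGroup ι ℂ) :
    ∑ k, coeCoeff k j U * star (coeCoeff k i U) = if i = j then 1 else 0 := by
  have unitary := congr_fun₂ (UnitaryGroup.star_mul_self (UnitaryGroup.transpose U * U)) i j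
  rw [mul_apply, one_apply] at unitary
  simp_rw [← unitary, mul_comm (coeCoeff _ j U)]
  rfl

/-- The Lie derivative of `v_{kl}`: the entry `(k, l)` of `Xᵀ V + V X`, where `V = Uᵀ U`. -/
def coeCoeffDeriv (k l : ι) : Matrix ι ι ℂ →ₗ[ℂ] C(unitaryGroup ι ℂ, ℂ) :=
  ∑ a, ((entryLinearMap ℂ ℂ a k).smulRight (coeCoeff a l) +
    (entryLinearMap ℂ ℂ a l).smulRight (coeCoeff k a))

theorem coeCoeffDeriv_apply (k l : ι) (X : Matrix ι ι ℂ) (U : unitaryGroup ι ℂ) :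
    coeCoeffDeriv k l X U = ∑ a, (X a k * coeCoeff a l U + X a l * coeCoeff k a U) := by
  simp [coeCoeffDeriv]

theorem coeCoeffDeriv_single_apply (a b k l : ι) (U : unitaryGroup ι ℂ) :
    coeCoeffDeriv k l (single a b 1) U =
      (if b = k then coeCoeff a l U else 0) + if b = l then coeCoeff k a U else 0 := by
  simp [coeCoeffDeriv_apply, single_apply, Finset.sum_add_distrib, ite_and]

theorem coeCoeffDeriv_one_apply (k l : ι) (U : unitaryGroup ι ℂ) :
    coeCoeffDeriv k l 1 U = 2 * coeCoeff k l U := by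
  simp [coeCoeffDeriv_apply, one_apply, Finset.sum_add_distrib, two_mul]

theorem hasLieDeriv_coeCoeff (k l : ι) : HasLieDeriv (coeCoeff k l) (coeCoeffDeriv k l) :=
    fun H U => by
  have deriv_sum := HasDerivAt.fun_sum (u := Finset.univ) fun b _ =>
    (HasDerivAt.fun_sum (u := Finset.univ) fun a _ =>
      (hasDerivAt_expUnitary_apply H a k).mul_const (coeCoeff a b U)).fun_mul
        (hasDerivAt_expUnitary_apply H b l)
  simp only [coeCoeff_mul_apply]
  refine deriv_sum.congr_deriv ?_
  simp only [zero_smul, selfAdjoint.expUnitary_zero, OneMemClass.coe_one, one_apply, mul_ite,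
    ite_mul, mul_one, one_mul, mul_zero, zero_mul, Finset.sum_ite_eq', Finset.mem_univ, if_true,
    Finset.sum_add_distrib, coeCoeffDeriv_apply, mul_comm (coeCoeff k _ U)]

section Moments

variable [MeasurableSpace (unitaryGroup ι ℂ)] [BorelSpace (unitaryGroup ι ℂ)]
  {μ : Measure (unitaryGroup ι ℂ)} [μ.IsMulRightInvariant] {i j : ι}

theorem integral_sum_lieDeriv_mul_coeCoeff_pow [IsFiniteMeasure μ] {κ : Type*} {s : Finset κ}
    {F : κ → C(unitaryGroup ι ℂ, ℂ)} {D : κ → Matrix ι ι ℂ →ₗ[ℂ] C(unitaryGroup ι ℂ, ℂ)}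
    (hF : ∀ k, HasLieDeriv (F k) (D k)) (X : κ → Matrix ι ι ℂ) (i j : ι) (n m : ℕ) :
    ∫ U, ∑ k ∈ s, (D k (X k) U * (coeCoeff i j U ^ n * star (coeCoeff i j U) ^ m) +
      F k U * (n * coeCoeff i j U ^ (n - 1) * coeCoeffDeriv i j (X k) U *
          star (coeCoeff i j U) ^ m -
        m * star (coeCoeff i j U) ^ (m - 1) * star (coeCoeffDeriv i j (star (X k)) U) *
          coeCoeff i j U ^ n)) ∂μ = 0 := by
  have hq := hasLieDeriv_coeCoeff i j
  rw [← HasLieDeriv.integral_sum_eq_zero (μ := μ) (s := s)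
    (fun k => (hF k).mul ((hq.pow n).mul (hq.star.pow m))) X]
  refine integral_congr_ae (.of_forall fun U => Finset.sum_congr rfl fun k _ => ?_)
  simp only [LinearMap.add_apply, LinearMap.smul_apply, starDeriv_apply, smul_eq_mul,
    ContinuousMap.add_apply, ContinuousMap.mul_apply, ContinuousMap.pow_apply,
    ContinuousMap.natCast_apply, ContinuousMap.star_apply]
  ring

theorem integral_coeCoeff_pow_mul_star_pow_of_ne [IsFiniteMeasure μ] {n m : ℕ} (hnm : n ≠ m) :
    ∫ U, coeCoeff i j U ^ n * star (coeCoeff i j U) ^ m ∂μ = 0 := by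
  have scaling : ∫ U, (2 * (n - m) : ℂ) *
      (coeCoeff i j U ^ n * star (coeCoeff i j U) ^ m) ∂μ = 0 := by
    rw [← integral_sum_lieDeriv_mul_coeCoeff_pow (μ := μ) (s := {()}) (fun _ => HasLieDeriv.one)
      (fun _ => 1) i j n m]
    refine integral_congr_ae (.of_forall fun U => ?_)
    simp only [LinearMap.zero_apply, ContinuousMap.zero_apply, zero_mul, ContinuousMap.one_apply,
      coeCoeffDeriv_one_apply, star_one, star_mul', star_ofNat, one_mul, zero_add,
      Finset.sum_singleton]
    linear_combination
      -2 * star (coeCoeff i j U) ^ m * natCast_mul_pow_sub_one_mul n (coeCoeff i j U) +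
        2 * coeCoeff i j U ^ n * natCast_mul_pow_sub_one_mul m (star (coeCoeff i j U))
  rw [integral_const_mul] at scaling
  refine (mul_eq_zero.mp scaling).resolve_left (mul_ne_zero two_ne_zero ?_)
  exact sub_ne_zero.mpr (Nat.cast_injective.ne hnm)

theorem integral_diag_mul_coeCoeff_pow [IsFiniteMeasure μ] (hij : i ≠ j) (n : ℕ) :
    (Fintype.card ι + 2 * n + 1) * ∫ U, coeCoeff j j U * star (coeCoeff j j U) *
        (coeCoeff i j U ^ n * star (coeCoeff i j U) ^ n) ∂μ =
      2 * ∫ U, coeCoeff i j U ^ n * star (coeCoeff i j U) ^ n ∂μ := by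
  have := compactSpace_unitaryGroup ι ℂ
  rw [← sub_eq_zero, ← integral_const_mul, ← integral_const_mul,
    ← integral_sub (integrable_of_continuous (by fun_prop))
      (integrable_of_continuous (by fun_prop)),
    ← integral_sum_lieDeriv_mul_coeCoeff_pow (μ := μ) (s := Finset.univ)
      (fun k => (hasLieDeriv_coeCoeff k j).mul (hasLieDeriv_coeCoeff j j).star)
      (fun k => single j k 1) i j n n]
  refine integral_congr_ae (.of_forall fun U => Eq.symm ?_)
  set q := coeCoeff i j U with hq
  set d := coeCoeff j j U with hd
  calc
    ∑ k, _ = ∑ k, (d * star d * (q ^ n * star q ^ n) -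
          coeCoeff k j U * star (coeCoeff k j U) * (2 * q ^ n * star q ^ n) -
          coeCoeff k j U * star (coeCoeff k i U) * (n * star d * q ^ n * star q ^ (n - 1)) +
          (if k = j then d * star d * (q ^ n * star q ^ n + n * q ^ (n - 1) * q * star q ^ n)
            else 0) +
          if k = i then d * star d * (n * q ^ (n - 1) * q * star q ^ n) else 0) := by
        refine Finset.sum_congr rfl fun k _ => ?_
        simp only [LinearMap.add_apply, LinearMap.smul_apply, smul_eq_mul, starDeriv_apply,
          ContinuousMap.add_apply, ContinuousMap.mul_apply, ContinuousMap.star_apply,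
          coeCoeffDeriv_single_apply, star_eq_conjTranspose, conjTranspose_single, star_one,
          star_add, if_true, if_neg hij.symm, zero_add, coeCoeff_comm j k, coeCoeff_comm i k]
        rcases eq_or_ne k j with rfl | hkj
        · simp only [← hd, if_true, if_neg hij.symm, zero_add, add_zero]
          ring
        rcases eq_or_ne k i with rfl | hki
        · simp only [← hq, if_neg hkj, if_true, add_zero]
          ring
        · simp only [if_neg hkj, if_neg hki, add_zero]
          ring
    _ = Fintype.card ι * (d * star d * (q ^ n * star q ^ n)) - 2 * q ^ n * star q ^ n +
          d * star d * (q ^ n * star q ^ n + n * q ^ (n - 1) * q * star q ^ n) +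
          d * star d * (n * q ^ (n - 1) * q * star q ^ n) := by
        simp only [Finset.sum_add_distrib, Finset.sum_sub_distrib, ← Finset.sum_mul,
          sum_coeCoeff_mul_star_coeCoeff, if_true, if_neg hij, Finset.sum_const, nsmul_eq_mul,
          Finset.card_univ, Finset.sum_ite_eq', Finset.mem_univ]
        ring
    _ = _ := by
        linear_combination 2 * d * star d * star q ^ n * natCast_mul_pow_sub_one_mul n q

theorem integral_coeCoeff_pow_succ [IsFiniteMeasure μ] (hij : i ≠ j) (n : ℕ) :
    (Fintype.card ι - 1 + n) * ∫ U, coeCoeff i j U ^ (n + 1) * star (coeCoeff i j U) ^ (n + 1) ∂μ =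
      (n + 1) * (∫ U, coeCoeff i j U ^ n * star (coeCoeff i j U) ^ n ∂μ -
        ∫ U, coeCoeff j j U * star (coeCoeff j j U) *
          (coeCoeff i j U ^ n * star (coeCoeff i j U) ^ n) ∂μ) := by
  have := compactSpace_unitaryGroup ι ℂ
  rw [← sub_eq_zero, ← integral_sub (integrable_of_continuous (by fun_prop))
    (integrable_of_continuous (by fun_prop)), ← integral_const_mul, ← integral_const_mul,
    ← integral_sub (integrable_of_continuous (by fun_prop))
      (integrable_of_continuous (by fun_prop)),
    ← integral_sum_lieDeriv_mul_coeCoeff_pow (μ := μ) (s := Finset.univ.erase j)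
      (fun k => hasLieDeriv_coeCoeff k j) (fun k => single i k 1) i j n (n + 1)]
  refine integral_congr_ae (.of_forall fun U => Eq.symm ?_)
  set q := coeCoeff i j U with hq
  set d := coeCoeff j j U
  calc
    ∑ k ∈ Finset.univ.erase j, _ = ∑ k ∈ Finset.univ.erase j, (q * (q ^ n * star q ^ (n + 1)) -
          coeCoeff k j U * star (coeCoeff k j U) * ((n + 1) * q ^ n * star q ^ n) +
          if k = i then n * q ^ (n - 1) * q * q * star q ^ (n + 1) else 0) := by
        refine Finset.sum_congr rfl fun k hk => ?_
        have hkj := Finset.ne_of_mem_erase hk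
        simp only [coeCoeffDeriv_single_apply, star_eq_conjTranspose, conjTranspose_single,
          star_one, if_true, if_neg hij, if_neg hkj, add_zero, Nat.cast_succ,
          Nat.add_sub_cancel]
        rcases eq_or_ne k i with rfl | hki
        · simp only [← hq, if_true]
          ring
        · simp only [if_neg hki]
          ring
    _ = (Fintype.card ι - 1) * (q * (q ^ n * star q ^ (n + 1))) -
          (1 - d * star d) * ((n + 1) * q ^ n * star q ^ n) +
          n * q ^ (n - 1) * q * q * star q ^ (n + 1) := by
        have norm : ∑ k ∈ Finset.univ.erase j, coeCoeff k j U * star (coeCoeff k j U) =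
            1 - d * star d := by
          rw [Finset.sum_erase_eq_sub (Finset.mem_univ j), sum_coeCoeff_mul_star_coeCoeff,
            if_pos rfl]
        simp only [Finset.sum_add_distrib, Finset.sum_sub_distrib, ← Finset.sum_mul, norm,
          Finset.sum_const, nsmul_eq_mul, Finset.cast_card_erase_of_mem (Finset.mem_univ j),
          Finset.card_univ, Finset.sum_ite_eq',
          if_pos (Finset.mem_erase_of_ne_of_mem hij (Finset.mem_univ i))]
        ring
    _ = _ := by
        linear_combination q * star q ^ (n + 1) * natCast_mul_pow_sub_one_mul n q

theorem integral_coeCoeff_pow_mul_star_pow [IsProbabilityMeasure μ] (hij : i ≠ j) (n : ℕ) :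
    ∫ U, coeCoeff i j U ^ n * star (coeCoeff i j U) ^ n ∂μ = coeMoment (Fintype.card ι) n := by
  have one_lt_card : 1 < Fintype.card ι := Fintype.one_lt_card_iff.mpr ⟨i, j, hij⟩
  induction n with
  | zero =>
    simp only [pow_zero, mul_one, integral_const, probReal_univ, one_smul,
      coeMoment_zero one_lt_card]
  | succ n ih =>
    have diag := integral_diag_mul_coeCoeff_pow (μ := μ) hij n
    have step := integral_coeCoeff_pow_succ (μ := μ) hij n
    rw [ih] at diag step
    have h₁ : (Fintype.card ι - 1 + n : ℂ) ≠ 0 := natCast_sub_one_add_natCast_ne_zero one_lt_card n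
    have h₂ : (Fintype.card ι + 2 * n + 1 : ℂ) ≠ 0 :=
      mod_cast (Fintype.card ι + 2 * n).succ_ne_zero
    refine mul_left_cancel₀ (mul_ne_zero h₂ h₁) ?_
    linear_combination (Fintype.card ι + 2 * n + 1 : ℂ) * step - (n + 1) * diag -
      coeMoment_succ one_lt_card n

theorem integral_ofReal_mul_coeCoeff_pow [IsProbabilityMeasure μ] (hij : i ≠ j) (r : ℝ)
    (n m : ℕ) :
    ∫ U, (r * coeCoeff i j U) ^ n * starRingEnd ℂ ((r * coeCoeff i j U) ^ m) ∂μ =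
      if n = m then ((r : ℂ) ^ 2) ^ n * coeMoment (Fintype.card ι) n else 0 := by
  have pull_out (U : unitaryGroup ι ℂ) :
      (r * coeCoeff i j U) ^ n * starRingEnd ℂ ((r * coeCoeff i j U) ^ m) =
        r ^ (n + m) * (coeCoeff i j U ^ n * star (coeCoeff i j U) ^ m) := by
    simp only [map_pow, map_mul, Complex.conj_ofReal, RCLike.star_def]
    ring
  simp only [pull_out, integral_const_mul]
  split_ifs with hnm
  · subst hnm
    rw [integral_coeCoeff_pow_mul_star_pow hij, ← pow_mul, two_mul]
  · rw [integral_coeCoeff_pow_mul_star_pow_of_ne hnm, mul_zero]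

end Moments

end UnitaryGroup

/-- For fixed `i ≠ j`, the off-diagonal entries `√N v_{ij}^{(N)}` of a sequence of COE
matrices converge weakly to a standard complex Gaussian: all mixed moments
`E[(√N v_{ij})^n conj(√N v_{ij})^m]` converge to `δ_{nm} n!`. -/
theorem stmt19 (i j : ℕ) (hij : i ≠ j)
    (μ : (N : ℕ) → Measure (Matrix.unitaryGroup (Fin N) ℂ))
    [∀ N, (μ N).IsHaarMeasure] [∀ N, IsProbabilityMeasure (μ N)]
    (n m : ℕ) :
    Tendsto (fun N : ℕ =>
        if h : i < N ∧ j < N then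
          ∫ U, ((Real.sqrt N : ℂ) * coeEntry U ⟨i, h.1⟩ ⟨j, h.2⟩)^n *
            (starRingEnd ℂ)
              (((Real.sqrt N : ℂ) * coeEntry U ⟨i, h.1⟩ ⟨j, h.2⟩)^m) ∂(μ N)
        else 0)
      atTop (nhds (if n = m then (n.factorial : ℂ) else 0)) := by
  have moments : ∀ᶠ N : ℕ in atTop,
      (if n = m then (N : ℂ) ^ n * coeMoment N n else 0) =
        if h : i < N ∧ j < N then
          ∫ U, ((Real.sqrt N : ℂ) * coeEntry U ⟨i, h.1⟩ ⟨j, h.2⟩) ^ n *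
            starRingEnd ℂ (((Real.sqrt N : ℂ) * coeEntry U ⟨i, h.1⟩ ⟨j, h.2⟩) ^ m) ∂(μ N)
        else 0 := by
    filter_upwards [eventually_gt_atTop i, eventually_gt_atTop j] with N hi hj
    have := compactSpace_unitaryGroup (Fin N) ℂ
    have := isMulRightInvariant_of_isHaarMeasure (μ N)
    have ne : (⟨i, hi⟩ : Fin N) ≠ ⟨j, hj⟩ := by simpa using hij
    have sq_sqrt : (Real.sqrt N : ℂ) ^ 2 = N := mod_cast Real.sq_sqrt N.cast_nonneg
    have exact_moment := integral_ofReal_mul_coeCoeff_pow (μ := μ N) ne (Real.sqrt N) n m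
    rw [sq_sqrt, Fintype.card_fin] at exact_moment
    rw [dif_pos ⟨hi, hj⟩]
    exact exact_moment.symm
  refine Tendsto.congr' moments ?_
  split_ifs
  · exact tendsto_pow_mul_coeMoment n
  · exact tendsto_const_nhds
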